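/- The integral from 0 to e^{−2π/√10} of q · E(q)^3 E(q^{10})^8 / E(q^5)^7 dq equals (√(10 − 4√5) − 1)/4. -/

import Mathlib

open Real

/-- Euler's product `E(q) = ∏_{j=1}^∞ (1 - q^j)`. -/
noncomputable def eulerE (q : ℝ) : ℝ := ∏' j : ℕ, (1 - q ^ (j + 1))

open Real


open Filter Topology

/-- q-Pochhammer -/
noncomputable def qp (x q : ℝ) : ℝ := ∏' k : ℕ, (1 - x * q ^ k)

lemma qp_summable (x : ℝ) {q : ℝ} (hq : |q| < 1) : Summable fun k : ℕ => -(x * q ^ k) :=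
  ((summable_geometric_of_abs_lt_one hq).mul_left x).neg

lemma qp_tendsto (x : ℝ) {q : ℝ} (hq : |q| < 1) :
    Tendsto (fun N => ∏ k ∈ Finset.range N, (1 - x * q ^ k)) atTop (𝓝 (qp x q)) := by
  have h : Multipliable fun k : ℕ => 1 + -(x * q ^ k) :=
    multipliable_one_add_of_summable (qp_summable x hq).norm
  simpa [qp, sub_eq_add_neg] using h.hasProd.tendsto_prod_nat

lemma eulerE_eq_qp (q : ℝ) : eulerE q = qp q q := by
  unfold eulerE qp
  congr 1; ext j; ring

lemma qp_ne_zero {x q : ℝ} (hq : |q| < 1) (h : ∀ k : ℕ, 1 - x * q ^ k ≠ 0) : qp x q ≠ 0 := by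
  have := tprod_one_add_ne_zero_of_summable (f := fun k : ℕ => -(x * q ^ k))
    (fun k => by simpa [sub_eq_add_neg] using h k) (qp_summable x hq).norm
  simpa [qp, sub_eq_add_neg] using this

lemma one_sub_pow_ne {q : ℝ} (hq : |q| < 1) (k : ℕ) : 1 - q ^ (k + 1) ≠ 0 := by
  have : |q ^ (k+1)| < 1 := by
    rw [abs_pow]; exact pow_lt_one₀ (abs_nonneg _) hq (by simp)
  have := (abs_lt.1 this).2
  linarith

lemma eulerE_ne_zero {q : ℝ} (hq : |q| < 1) : eulerE q ≠ 0 := by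
  rw [eulerE_eq_qp]
  refine qp_ne_zero hq fun k => ?_
  have := one_sub_pow_ne hq k
  rwa [pow_succ'] at this

lemma eulerE_tendsto {q : ℝ} (hq : |q| < 1) :
    Tendsto (fun N => ∏ k ∈ Finset.range N, (1 - q ^ (k + 1))) atTop (𝓝 (eulerE q)) := by
  rw [eulerE_eq_qp]
  simpa [pow_succ'] using qp_tendsto q hq

lemma eulerE_pos {q : ℝ} (h0 : 0 < q) (h1 : q < 1) : 0 < eulerE q := by
  have hq : |q| < 1 := by rw [abs_of_pos h0]; exact h1
  refine lt_of_le_of_ne (ge_of_tendsto' (eulerE_tendsto hq) fun N => ?_) (eulerE_ne_zero hq).symm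
  refine Finset.prod_nonneg fun k _ => ?_
  have := pow_le_one₀ (n := k+1) h0.le h1.le
  linarith

lemma abs_pow_lt {q : ℝ} (hq : |q| < 1) {n : ℕ} (hn : n ≠ 0) : |q ^ n| < 1 := by
  rw [abs_pow]; exact pow_lt_one₀ (abs_nonneg _) hq hn

lemma qp_mul_neg (x : ℝ) {q : ℝ} (hq : |q| < 1) : qp x q * qp (-x) q = qp (x^2) (q^2) := by
  refine tendsto_nhds_unique ((qp_tendsto x hq).mul (qp_tendsto (-x) hq)) ?_
  refine (qp_tendsto (x^2) (abs_pow_lt hq two_ne_zero)).congr fun N => ?_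
  rw [← Finset.prod_mul_distrib]
  exact Finset.prod_congr rfl fun k _ => by ring

lemma qp_split (x : ℝ) {q : ℝ} (hq : |q| < 1) : qp x q = qp x (q^2) * qp (x*q) (q^2) := by
  have h2 := abs_pow_lt hq two_ne_zero
  have hs : Tendsto (fun N : ℕ => 2 * N) atTop atTop :=
    tendsto_id.const_mul_atTop' (by norm_num)
  refine tendsto_nhds_unique ((qp_tendsto x hq).comp hs) ?_
  refine ((qp_tendsto x h2).mul (qp_tendsto (x*q) h2)).congr fun N => ?_
  simp only [Function.comp]
  induction N with
  | zero => simp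
  | succ N ih =>
    rw [show 2 * (N+1) = 2*N+1+1 by ring, Finset.prod_range_succ _ (2*N+1),
      Finset.prod_range_succ _ (2*N), ← ih, Finset.prod_range_succ, Finset.prod_range_succ]
    ring

lemma qp_split5 (x : ℝ) {q : ℝ} (hq : |q| < 1) : qp x q =
    qp x (q^5) * qp (x*q) (q^5) * qp (x*q^2) (q^5) * qp (x*q^3) (q^5) * qp (x*q^4) (q^5) := by
  have h2 := abs_pow_lt hq (n := 5) (by norm_num)
  have hs : Tendsto (fun N : ℕ => 5 * N) atTop atTop :=
    tendsto_id.const_mul_atTop' (by norm_num)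
  refine tendsto_nhds_unique ((qp_tendsto x hq).comp hs) ?_
  refine (((((qp_tendsto x h2).mul (qp_tendsto (x*q) h2)).mul (qp_tendsto (x*q^2) h2)).mul
    (qp_tendsto (x*q^3) h2)).mul (qp_tendsto (x*q^4) h2)).congr fun N => ?_
  simp only [Function.comp]
  induction N with
  | zero => simp
  | succ N ih =>
    rw [show 5 * (N+1) = 5*N+1+1+1+1+1 by ring, Finset.prod_range_succ _ (5*N+1+1+1+1),
      Finset.prod_range_succ _ (5*N+1+1+1), Finset.prod_range_succ _ (5*N+1+1),
      Finset.prod_range_succ _ (5*N+1), Finset.prod_range_succ _ (5*N), ← ih]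
    simp only [Finset.prod_range_succ]
    ring

lemma qp_succ (x : ℝ) {q : ℝ} (hq : |q| < 1) : qp x q = (1 - x) * qp (x*q) q := by
  refine tendsto_nhds_unique ((qp_tendsto x hq).comp (tendsto_add_atTop_nat 1)) ?_
  refine ((qp_tendsto (x*q) hq).const_mul (1-x)).congr fun N => ?_
  simp only [Function.comp]
  rw [Finset.prod_range_succ', mul_comm]
  congr 1
  · exact Finset.prod_congr rfl fun k _ => by ring
  · simp

/-- triangular numbers -/
def tri (j : ℤ) : ℕ := (j * (j + 1) / 2).toNat

lemma two_tri (j : ℤ) : 2 * (tri j : ℤ) = j * (j + 1) := by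
  have h0 : 0 ≤ j * (j+1) := by
    rcases le_or_gt 0 j with h | h
    · positivity
    · nlinarith
  have h2 : (2:ℤ) ∣ j * (j+1) := (Int.even_mul_succ_self j).two_dvd
  unfold tri
  rw [Int.toNat_of_nonneg (by positivity)]
  omega

lemma tri_succ (j : ℤ) : (tri (j+1) : ℤ) = tri j + (j + 1) := by
  have := two_tri j; have := two_tri (j+1)
  nlinarith

lemma tri_refl (j : ℤ) : tri (-1 - j) = tri j := by
  have := two_tri j; have := two_tri (-1-j)
  zify; nlinarith

lemma tri_zero : tri 0 = 0 := rfl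

lemma pow_tri_succ {q : ℝ} (hq : q ≠ 0) (j : ℤ) : q ^ tri (j+1) = q ^ tri j * q ^ (j+1) := by
  rw [← zpow_natCast, ← zpow_natCast, tri_succ, zpow_add₀ hq]

/-- theta coefficient -/
noncomputable def tc (q : ℝ) (j : ℤ) : ℝ := (-1) ^ j * q ^ tri j

lemma tc_succ {q : ℝ} (hq : q ≠ 0) (j : ℤ) : tc q (j+1) = - tc q j * q ^ (j+1) := by
  unfold tc
  rw [pow_tri_succ hq, zpow_add_one₀ (by norm_num)]; ring

lemma tc_pred {q : ℝ} (hq : q ≠ 0) (j : ℤ) : tc q (j-1) * q ^ j = - tc q j := by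
  have := tc_succ hq (j-1)
  rw [sub_add_cancel] at this
  rw [this]; ring

/-- `(q;q)_n` -/
noncomputable def qf (q : ℝ) (n : ℕ) : ℝ := ∏ k ∈ Finset.range n, (1 - q ^ (k + 1))

/-- `1/(q;q)_k` -/
noncomputable def qu (q : ℝ) (k : ℤ) : ℝ := if 0 ≤ k then (qf q k.toNat)⁻¹ else 0

lemma qf_ne_zero {q : ℝ} (hq : |q| < 1) (n : ℕ) : qf q n ≠ 0 :=
  Finset.prod_ne_zero_iff.2 fun k _ => one_sub_pow_ne hq k

lemma qu_rec {q : ℝ} (hq : |q| < 1) (k : ℤ) : qu q (k - 1) = (1 - q ^ k) * qu q k := by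
  rcases lt_trichotomy k 0 with h | h | h
  · simp [qu, show ¬ (0 ≤ k) by omega, show ¬ (1 ≤ k) by omega]
  · subst h; simp [qu]
  · obtain ⟨n, rfl⟩ : ∃ n : ℕ, k = n + 1 := ⟨(k-1).toNat, by omega⟩
    have e : ((n:ℤ) + 1).toNat = n + 1 := by omega
    simp only [qu, add_sub_cancel_right, e, Int.toNat_natCast]
    rw [if_pos (by omega), if_pos (by omega)]
    have h1 := one_sub_pow_ne hq n
    have h2 := qf_ne_zero hq n
    rw [qf, qf, Finset.prod_range_succ] 
    rw [qf] at h2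
    rw [show q ^ ((n:ℤ)+1) = q ^ (n+1) by norm_cast]
    field_simp

/-- central coefficient -/
noncomputable def qc (q : ℝ) (n : ℕ) (j : ℤ) : ℝ := qf q (2*n) * qu q (n + j) * qu q (n - j)

lemma qc_rec {q : ℝ} (h0 : q ≠ 0) (hq : |q| < 1) (n : ℕ) (j : ℤ) :
    qc q (n+1) j = (1 + q^(2*n+1)) * qc q n j + q^((n:ℤ)+1-j) * qc q n (j-1)
      + q^((n:ℤ)+1+j) * qc q n (j+1) := by
  have e1 := qu_rec hq ((n:ℤ)+1+j)
  have e2 := qu_rec hq ((n:ℤ)+1-j)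
  have e3 := qu_rec hq ((n:ℤ)+j)
  have e4 := qu_rec hq ((n:ℤ)-j)
  rw [show (n:ℤ)+1+j-1 = n+j by ring] at e1
  rw [show (n:ℤ)+1-j-1 = n-j by ring] at e2
  have f1 : q^((n:ℤ)+1+j) * q^((n:ℤ)+1-j) = q^(2*n+2) := by
    rw [← zpow_add₀ h0, ← zpow_natCast]; congr 1; push_cast; ring
  have f2 : q^((n:ℤ)+1+j) = q * q^((n:ℤ)+j) := by
    rw [show (n:ℤ)+1+j = 1 + (n+j) by ring, zpow_add₀ h0, zpow_one]
  have f3 : q^((n:ℤ)+1-j) = q * q^((n:ℤ)-j) := by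
    rw [show (n:ℤ)+1-j = 1 + (n-j) by ring, zpow_add₀ h0, zpow_one]
  unfold qc
  rw [show 2*(n+1) = 2*n+1+1 by ring]
  push_cast
  rw [show (n:ℤ) + (j-1) = n + j - 1 by ring, show (n:ℤ) - (j-1) = n + 1 - j by ring,
    show (n:ℤ) + (j+1) = n + 1 + j by ring, show (n:ℤ) - (j+1) = n - j - 1 by ring,
    e3, e4, e1, e2]
  rw [qf, qf, Finset.prod_range_succ, Finset.prod_range_succ, ← qf]
  rw [f2, f3] at f1 ⊢
  rw [show 2*n+1+1 = 2*n+2 by ring, ← f1]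
  have f4 : q^(2*n+1) = q * q^((n:ℤ)+j) * q^((n:ℤ)-j) := by
    have : q * q^(2*n+1) = q * (q * q^((n:ℤ)+j) * q^((n:ℤ)-j)) := by
      rw [← pow_succ', show 2*n+1+1 = 2*n+2 by ring, ← f1]; ring
    exact mul_left_cancel₀ h0 this
  rw [f4]
  ring


/-- term of the finite triple product -/
noncomputable def gt (q : ℝ) (n : ℕ) (j : ℤ) : ℝ := tc q j * qc q n j

lemma gt_rec {q : ℝ} (h0 : q ≠ 0) (hq : |q| < 1) (n : ℕ) (j : ℤ) :
    gt q (n+1) j = (1 + q^(2*n+1)) * gt q n j - q^n * gt q n (j+1) - q * q^n * gt q n (j-1) := by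
  unfold gt
  rw [qc_rec h0 hq, tc_succ h0]
  have a1 : tc q j * q^((n:ℤ)+1-j) = - (q * q^n * tc q (j-1)) := by
    have := tc_pred h0 j
    rw [eq_comm, neg_eq_iff_eq_neg] at this
    rw [this, zpow_sub₀ h0, zpow_add_one₀ h0, zpow_natCast]
    have : q^j ≠ 0 := zpow_ne_zero _ h0
    field_simp
  have a2 : q^((n:ℤ)+1+j) = q^n * q^(j+1) := by
    rw [← zpow_natCast, ← zpow_add₀ h0]; congr 1; ring
  rw [a2]
  linear_combination (qc q n (j-1)) * a1

lemma gt_zero (q : ℝ) (j : ℤ) : gt q 0 j = if j = 0 then 1 else 0 := by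
  unfold gt
  split_ifs with h
  · subst h; simp [tc, qc, tri_zero, qf, qu]
  · rcases lt_or_gt_of_ne h with h | h
    · simp [qc, qu, show ¬ (0 ≤ j) by omega]
    · simp [qc, qu, show ¬ (j ≤ 0) by omega]

lemma hasSum_succ {f : ℤ → ℝ} {a : ℝ} (h : HasSum f a) : HasSum (fun j => f (j+1)) a :=
  (Equiv.addRight (1:ℤ)).hasSum_iff.2 h

lemma hasSum_pred {f : ℤ → ℝ} {a : ℝ} (h : HasSum f a) : HasSum (fun j => f (j-1)) a :=
  (Equiv.subRight (1:ℤ)).hasSum_iff.2 h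

lemma jtp_fin {q z : ℝ} (h0 : q ≠ 0) (hq : |q| < 1) (hz : z ≠ 0) (n : ℕ) :
    HasSum (fun j : ℤ => gt q n j * z ^ j)
      (∏ k ∈ Finset.range n, ((1 - z * q * q^k) * (1 - z⁻¹ * q^k))) := by
  have hzz : z * z⁻¹ = 1 := mul_inv_cancel₀ hz
  induction n with
  | zero =>
    have : (fun j : ℤ => gt q 0 j * z ^ j) = fun j => if j = 0 then 1 else 0 := by
      ext j
      rw [gt_zero]
      split_ifs with h
      · subst h; simp
      · simp
    rw [this]; simpa using hasSum_ite_eq (0:ℤ) (1:ℝ)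
  | succ n ih =>
    rw [Finset.prod_range_succ]
    have h := ((ih.mul_left (1 + q^(2*n+1))).add ((hasSum_succ ih).mul_left (-(z⁻¹ * q^n)))).add
      ((hasSum_pred ih).mul_left (-(z * q * q^n)))
    have e1 : (fun j : ℤ => gt q (n+1) j * z ^ j) = fun j => (1 + q^(2*n+1)) * (gt q n j * z ^ j)
        + (-(z⁻¹ * q^n)) * (gt q n (j+1) * z ^ (j+1))
        + (-(z * q * q^n)) * (gt q n (j-1) * z ^ (j-1)) := by
      ext j
      rw [gt_rec h0 hq, zpow_add_one₀ hz, zpow_sub_one₀ hz]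
      linear_combination (q*q^n*z^j * gt q n (j-1) + q^n * gt q n (j+1) * z^j) * hzz
    rw [e1]
    have e2 : (∏ k ∈ Finset.range n, ((1 - z * q * q^k) * (1 - z⁻¹ * q^k)))
        * ((1 - z * q * q^n) * (1 - z⁻¹ * q^n)) =
        (1 + q^(2*n+1)) * (∏ k ∈ Finset.range n, ((1 - z * q * q^k) * (1 - z⁻¹ * q^k)))
        + (-(z⁻¹ * q^n)) * (∏ k ∈ Finset.range n, ((1 - z * q * q^k) * (1 - z⁻¹ * q^k)))
        + (-(z * q * q^n)) * (∏ k ∈ Finset.range n, ((1 - z * q * q^k) * (1 - z⁻¹ * q^k))) := by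
      linear_combination
        (∏ k ∈ Finset.range n, ((1 - z * q * q^k) * (1 - z⁻¹ * q^k))) * q * q^n * q^n * hzz
    rw [e2]; exact h

lemma jac_fin {q : ℝ} (h0 : q ≠ 0) (hq : |q| < 1) (n : ℕ) :
    HasSum (fun j : ℤ => gt q (n+1) j * j) (qf q (n+1) * qf q n) := by
  have step : ∀ (n : ℕ) (a b : ℝ), HasSum (fun j : ℤ => gt q n j) a →
      HasSum (fun j : ℤ => gt q n j * j) b → HasSum (fun j : ℤ => gt q (n+1) j * j)
        ((1 + q^(2*n+1)) * b - q^n * (b - a) - q * q^n * (b + a)) := by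
    intro n a b ha hb
    have h := ((hb.mul_left (1 + q^(2*n+1))).sub
      (((hasSum_succ hb).sub (hasSum_succ ha)).mul_left (q^n))).sub
      (((hasSum_pred hb).add (hasSum_pred ha)).mul_left (q * q^n))
    have e1 : (fun j : ℤ => gt q (n+1) j * (j:ℝ)) = fun j : ℤ => (1 + q^(2*n+1)) * (gt q n j * j)
        - q^n * (gt q n (j+1) * ((j+1 : ℤ):ℝ) - gt q n (j+1))
        - q * q^n * (gt q n (j-1) * ((j-1 : ℤ) : ℝ) + gt q n (j-1)) := by
      ext j
      rw [gt_rec h0 hq]; push_cast; ring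
    rw [e1]; exact h
  induction n with
  | zero =>
    have ha := jtp_fin h0 hq one_ne_zero 0
    simp only [one_zpow, mul_one] at ha
    have hb : HasSum (fun j : ℤ => gt q 0 j * (j:ℝ)) 0 := by
      have : (fun j : ℤ => gt q 0 j * (j:ℝ)) = fun _ => 0 := by
        ext j; rw [gt_zero]; split_ifs with h
        · subst h; simp
        · simp
      rw [this]; exact hasSum_zero
    have := step 0 _ _ ha hb
    convert this using 1
    simp [qf]
  | succ n ih =>
    have ha := jtp_fin h0 hq one_ne_zero (n+1)
    simp only [one_zpow, mul_one, inv_one] at ha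
    rw [Finset.prod_eq_zero (Finset.mem_range.2 (Nat.succ_pos n)) (by simp)] at ha
    have := step (n+1) _ _ ha ih
    convert this using 1
    rw [show qf q (n+1+1) = qf q (n+1) * (1 - q^(n+1+1)) by rw [qf, Finset.prod_range_succ, ← qf]]
    rw [show qf q (n+1) = qf q n * (1 - q^(n+1)) by rw [qf, Finset.prod_range_succ, ← qf]]
    ring

lemma qf_tendsto {q : ℝ} (hq : |q| < 1) : Tendsto (qf q) atTop (𝓝 (eulerE q)) := eulerE_tendsto hq

lemma qu_tendsto {q : ℝ} (hq : |q| < 1) (j : ℤ) :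
    Tendsto (fun n : ℕ => qu q (n + j)) atTop (𝓝 (eulerE q)⁻¹) := by
  have h1 : Tendsto (fun n : ℕ => ((n:ℤ) + j).toNat) atTop atTop := by
    refine tendsto_atTop.2 fun b => ?_
    filter_upwards [eventually_ge_atTop (b + j.natAbs)] with n hn
    omega
  refine (((qf_tendsto hq).comp h1).inv₀ (eulerE_ne_zero hq)).congr' ?_
  filter_upwards [eventually_ge_atTop (j.natAbs)] with n hn
  simp [qu, show 0 ≤ (n:ℤ) + j by omega]

lemma qc_tendsto {q : ℝ} (hq : |q| < 1) (j : ℤ) :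
    Tendsto (fun n : ℕ => qc q n j) atTop (𝓝 (eulerE q)⁻¹) := by
  have hs : Tendsto (fun N : ℕ => 2 * N) atTop atTop :=
    tendsto_id.const_mul_atTop' (by norm_num)
  have := (((qf_tendsto hq).comp hs).mul (qu_tendsto hq j)).mul (qu_tendsto hq (-j))
  rw [mul_inv_cancel₀ (eulerE_ne_zero hq), one_mul] at this
  simpa [qc, sub_eq_add_neg] using this

lemma qc_bdd {q : ℝ} (hq : |q| < 1) : ∃ C, 0 ≤ C ∧ ∀ n j, |qc q n j| ≤ C := by
  obtain ⟨A, hA⟩ := (qf_tendsto hq).abs.bddAbove_range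
  obtain ⟨B, hB⟩ := ((qf_tendsto hq).inv₀ (eulerE_ne_zero hq)).abs.bddAbove_range
  have hA' : ∀ n, |qf q n| ≤ A := fun n => hA ⟨n, rfl⟩
  have hB' : ∀ n, |(qf q n)⁻¹| ≤ B := fun n => hB ⟨n, rfl⟩
  have hA0 : 0 ≤ A := (abs_nonneg _).trans (hA' 0)
  have hB0 : 0 ≤ B := (abs_nonneg _).trans (hB' 0)
  have hu : ∀ k, |qu q k| ≤ B := by
    intro k; unfold qu; split_ifs
    · exact hB' _
    · simpa using hB0
  refine ⟨A * B * B, by positivity, fun n j => ?_⟩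
  unfold qc
  rw [abs_mul, abs_mul]
  gcongr
  · exact hA' _
  · exact hu _
  · exact hu _

lemma summable_int {f : ℤ → ℝ} (h1 : Summable fun n : ℕ => f n)
    (h2 : Summable fun n : ℕ => f (-1 - n)) : Summable f := by
  refine Summable.of_nat_of_neg_add_one h1 ?_
  refine h2.congr fun n => ?_
  congr 1; ring

lemma summable_aux {r w : ℝ} (hr0 : 0 < r) (hr : r < 1) (hw : 0 < w) :
    Summable fun n : ℕ => r ^ tri n * w ^ n := by
  refine summable_of_ratio_test_tendsto_lt_one (l := 0) one_pos ?_ ?_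
  · exact Eventually.of_forall fun n => by positivity
  · have h : Tendsto (fun n : ℕ => r ^ (n+1) * w) atTop (𝓝 0) := by
      simpa using ((tendsto_pow_atTop_nhds_zero_of_lt_one hr0.le hr).comp
        (tendsto_add_atTop_nat 1)).mul_const w
    refine h.congr fun n => ?_
    have : r ^ tri ((n+1 : ℕ) : ℤ) = r ^ tri n * r ^ (n+1) := by
      have := pow_tri_succ hr0.ne' n
      push_cast; rw [this]; norm_cast
    rw [this, Real.norm_of_nonneg (by positivity), Real.norm_of_nonneg (by positivity)]
    have h1 : r ^ tri n ≠ 0 := by positivity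
    have h2 : w ^ n ≠ 0 := by positivity
    field_simp
    ring

lemma summable_tri_zpow {r w : ℝ} (hr0 : 0 < r) (hr : r < 1) (hw : 0 < w) :
    Summable fun j : ℤ => r ^ tri j * w ^ j := by
  refine summable_int ?_ ?_
  · simpa using summable_aux hr0 hr hw
  · refine ((summable_aux hr0 hr (inv_pos.2 hw)).mul_right w⁻¹).congr fun n => ?_
    rw [tri_refl, zpow_sub₀ hw.ne', zpow_neg_one, zpow_natCast, inv_pow]
    field_simp

theorem jtp {q z : ℝ} (h0 : q ≠ 0) (hq : |q| < 1) (hz : z ≠ 0) :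
    HasSum (fun j : ℤ => tc q j * z ^ j) (eulerE q * (qp (z*q) q * qp z⁻¹ q)) := by
  have habs : ∀ j, |tc q j * z ^ j| = |q| ^ tri j * |z| ^ j := by
    intro j; simp [tc, abs_mul, abs_zpow]
  have hsum := summable_tri_zpow (abs_pos.2 h0) hq (abs_pos.2 hz)
  have hs : Summable (fun j : ℤ => tc q j * z ^ j) := by
    refine Summable.of_norm (hsum.congr fun j => ?_)
    rw [Real.norm_eq_abs, habs]
  obtain ⟨C, hC0, hC⟩ := qc_bdd hq
  have h1 : Tendsto (fun n : ℕ => ∑' j : ℤ, gt q n j * z ^ j) atTop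
      (𝓝 (∑' j : ℤ, (eulerE q)⁻¹ * (tc q j * z ^ j))) := by
    refine tendsto_tsum_of_dominated_convergence (hsum.mul_left C) (fun j => ?_)
      (Eventually.of_forall fun n j => ?_)
    · have := (qc_tendsto hq j).mul_const (tc q j * z^j)
      refine this.congr fun n => ?_
      unfold gt; ring
    · rw [show gt q n j * z ^ j = qc q n j * (tc q j * z^j) by unfold gt; ring, Real.norm_eq_abs,
        abs_mul, habs]
      exact mul_le_mul_of_nonneg_right (hC n j) (by positivity)
  have h2 : Tendsto (fun n : ℕ => ∑' j : ℤ, gt q n j * z ^ j) atTop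
      (𝓝 (qp (z*q) q * qp z⁻¹ q)) := by
    refine ((qp_tendsto (z*q) hq).mul (qp_tendsto z⁻¹ hq)).congr fun n => ?_
    rw [(jtp_fin h0 hq hz n).tsum_eq, Finset.prod_mul_distrib]
  have h3 := tendsto_nhds_unique h2 h1
  rw [tsum_mul_left] at h3
  rw [h3, mul_inv_cancel_left₀ (eulerE_ne_zero hq)]
  exact hs.hasSum

lemma int_abs_le_two_zpow (j : ℤ) : |(j:ℝ)| ≤ 2 ^ j + 2⁻¹ ^ j := by
  have key : ∀ n : ℕ, (n:ℝ) ≤ 2 ^ n := fun n => by exact_mod_cast n.lt_two_pow_self.le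
  obtain ⟨n, rfl | rfl⟩ := j.eq_nat_or_neg
  · have : (0:ℝ) < 2⁻¹ ^ (n:ℤ) := by positivity
    have := key n
    simp only [Int.cast_natCast, zpow_natCast, Nat.abs_cast] at *
    linarith
  · have : (0:ℝ) < 2 ^ (-(n:ℤ)) := by positivity
    have := key n
    have e : (2⁻¹:ℝ) ^ (-(n:ℤ)) = 2 ^ n := by simp
    rw [e]
    simp only [Int.cast_neg, Int.cast_natCast, abs_neg, Nat.abs_cast]
    linarith

lemma summable_tri_int {r : ℝ} (hr0 : 0 < r) (hr : r < 1) :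
    Summable fun j : ℤ => r ^ tri j * |(j:ℝ)| := by
  refine Summable.of_nonneg_of_le (fun j => by positivity) (fun j => ?_)
    ((summable_tri_zpow hr0 hr (w := 2) (by norm_num)).add
    (summable_tri_zpow hr0 hr (w := 2⁻¹) (by norm_num)))
  rw [← mul_add]
  exact mul_le_mul_of_nonneg_left (int_abs_le_two_zpow j) (by positivity)

theorem jac {q : ℝ} (h0 : q ≠ 0) (hq : |q| < 1) :
    HasSum (fun j : ℤ => tc q j * j) (eulerE q ^ 3) := by
  have habs : ∀ j : ℤ, |tc q j * j| = |q| ^ tri j * |(j:ℝ)| := by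
    intro j; simp [tc, abs_mul, abs_zpow]
  have hsum := summable_tri_int (abs_pos.2 h0) hq
  have hs : Summable (fun j : ℤ => tc q j * j) := by
    refine Summable.of_norm (hsum.congr fun j => ?_)
    rw [Real.norm_eq_abs, habs]
  obtain ⟨C, hC0, hC⟩ := qc_bdd hq
  have h1 : Tendsto (fun n : ℕ => ∑' j : ℤ, gt q (n+1) j * j) atTop
      (𝓝 (∑' j : ℤ, (eulerE q)⁻¹ * (tc q j * j))) := by
    refine tendsto_tsum_of_dominated_convergence (hsum.mul_left C) (fun j => ?_)
      (Eventually.of_forall fun n j => ?_)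
    · have := ((qc_tendsto hq j).comp (tendsto_add_atTop_nat 1)).mul_const (tc q j * j)
      refine this.congr fun n => ?_
      unfold gt; simp only [Function.comp]; ring
    · rw [show gt q (n+1) j * j = qc q (n+1) j * (tc q j * j) by unfold gt; ring,
        Real.norm_eq_abs, abs_mul, habs]
      exact mul_le_mul_of_nonneg_right (hC _ j) (by positivity)
  have h2 : Tendsto (fun n : ℕ => ∑' j : ℤ, gt q (n+1) j * j) atTop
      (𝓝 (eulerE q * eulerE q)) := by
    refine (((qf_tendsto hq).comp (tendsto_add_atTop_nat 1)).mul (qf_tendsto hq)).congr fun n => ?_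
    rw [(jac_fin h0 hq n).tsum_eq]; rfl
  have h3 := tendsto_nhds_unique h2 h1
  rw [tsum_mul_left] at h3
  have : eulerE q ^ 3 = ∑' j : ℤ, tc q j * j := by
    rw [pow_succ', sq, h3, mul_inv_cancel_left₀ (eulerE_ne_zero hq)]
  rw [this]
  exact hs.hasSum

open Real
open Filter Topology

/-- lacunary theta series -/
noncomputable def th (e : ℤ → ℕ) (q : ℝ) : ℝ := ∑' n : ℤ, q ^ e n
/-- its `q d/dq` derivative -/
noncomputable def Dth (e : ℤ → ℕ) (q : ℝ) : ℝ := ∑' n : ℤ, (e n : ℝ) * q ^ e n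

/-- squares -/
def sqe (n : ℤ) : ℕ := n.natAbs ^ 2

lemma sqe_cast (n : ℤ) : (sqe n : ℤ) = n ^ 2 := by simp [sqe]

/-- admissible exponents -/
def Adm (e : ℤ → ℕ) : Prop := ∀ r : ℝ, 0 < r → r < 1 → Summable fun n : ℤ => r ^ e n

lemma adm_tri : Adm tri := fun r h0 h1 => by
  simpa using summable_tri_zpow h0 h1 one_pos

lemma pow_sqe {q : ℝ} (hq : q ≠ 0) (n : ℤ) : q ^ sqe n = (q^2) ^ tri n * q⁻¹ ^ n := by
  rw [← zpow_natCast, ← pow_mul, ← zpow_natCast, sqe_cast, inv_zpow, ← zpow_neg, ← zpow_add₀ hq]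
  congr 1
  push_cast; rw [two_tri]; ring

lemma adm_sqe : Adm sqe := fun r h0 h1 => by
  refine (summable_tri_zpow (r := r^2) (w := r⁻¹) (by positivity)
    (pow_lt_one₀ h0.le h1 two_ne_zero) (by positivity)).congr fun n => ?_
  rw [pow_sqe h0.ne']

lemma Adm.summable_mul {e : ℤ → ℕ} (he : Adm e) {r : ℝ} (h0 : 0 < r) (h1 : r < 1) :
    Summable fun n : ℤ => (e n : ℝ) * r ^ e n := by
  obtain ⟨s, hs, hs1⟩ := exists_between h1
  have hs0 : 0 < s := h0.trans hs
  have ht : Tendsto (fun n : ℕ => (n:ℝ) * (r/s) ^ n) atTop (𝓝 0) :=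
    tendsto_self_mul_const_pow_of_lt_one (by positivity) ((div_lt_one hs0).2 hs)
  obtain ⟨C, hC⟩ := ht.bddAbove_range
  have hC' : ∀ n : ℕ, (n:ℝ) * (r/s) ^ n ≤ C := fun n => hC ⟨n, rfl⟩
  refine Summable.of_nonneg_of_le (fun n => by positivity) (fun n => ?_) ((he s hs0 hs1).mul_left C)
  have := mul_le_mul_of_nonneg_right (hC' (e n)) (pow_pos hs0 (e n)).le
  rw [div_pow, mul_assoc, div_mul_cancel₀ _ (by positivity)] at this
  exact this

lemma Adm.norm {e : ℤ → ℕ} (he : Adm e) {q : ℝ} (h0 : q ≠ 0) (hq : |q| < 1) :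
    Summable fun n : ℤ => ‖q ^ e n‖ :=
  (he |q| (abs_pos.2 h0) hq).congr fun n => by simp

lemma Adm.norm_mul {e : ℤ → ℕ} (he : Adm e) {q : ℝ} (h0 : q ≠ 0) (hq : |q| < 1) :
    Summable fun n : ℤ => ‖(e n : ℝ) * q ^ e n‖ :=
  (he.summable_mul (abs_pos.2 h0) hq).congr fun n => by simp

lemma Adm.summable {e : ℤ → ℕ} (he : Adm e) {q : ℝ} (hq : |q| < 1) :
    Summable fun n : ℤ => q ^ e n := by
  obtain ⟨s, hs, hs1⟩ := exists_between hq
  have hs0 : 0 < s := (abs_nonneg q).trans_lt hs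
  refine Summable.of_norm_bounded (he s hs0 hs1) fun n => ?_
  rw [norm_pow]
  exact pow_le_pow_left₀ (norm_nonneg _) hs.le _

lemma Adm.hasDerivAt {e : ℤ → ℕ} (he : Adm e) {q : ℝ} (hq : |q| < 1) :
    ∃ d, HasDerivAt (th e) d q ∧ q * d = Dth e q := by
  obtain ⟨s, hs, hs1⟩ := exists_between hq
  have hs0 : 0 < s := (abs_nonneg q).trans_lt hs
  refine ⟨∑' n : ℤ, (e n : ℝ) * q ^ (e n - 1), ?_, ?_⟩
  · refine hasDerivAt_tsum_of_isPreconnected (u := fun n : ℤ => (e n : ℝ) * s ^ (e n - 1))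
      (t := Metric.ball 0 s) (y₀ := q) ?_ Metric.isOpen_ball
      (convex_ball _ _).isPreconnected (fun n y _ => hasDerivAt_pow (e n) y) (fun n y hy => ?_)
      (by simpa using hs) (he.summable hq) (by simpa using hs)
    · refine ((he.summable_mul hs0 hs1).mul_left s⁻¹).congr fun n => ?_
      rcases Nat.eq_zero_or_pos (e n) with h | h
      · simp [h]
      · rw [← Nat.succ_pred_eq_of_pos h]
        simp only [Nat.pred_eq_sub_one, Nat.succ_eq_add_one, Nat.add_sub_cancel, pow_succ]
        field_simp
    · have hy' : |y| < s := by simpa using hy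
      rw [_root_.norm_mul, norm_pow, Real.norm_eq_abs, Real.norm_eq_abs, Nat.abs_cast]
      gcongr
  · rw [← tsum_mul_left]
    unfold Dth
    congr 1; ext n
    rcases Nat.eq_zero_or_pos (e n) with h | h
    · simp [h]
    · obtain ⟨m, hm⟩ := Nat.exists_eq_succ_of_ne_zero h.ne'
      rw [hm]
      simp only [Nat.succ_eq_add_one, Nat.add_sub_cancel, pow_succ]
      ring

noncomputable abbrev phi := th sqe
noncomputable abbrev Psi := th tri

lemma neg_pow_sqe (q : ℝ) (n : ℤ) : (-q) ^ sqe n = (-1) ^ n * q ^ sqe n := by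
  rw [neg_pow]
  congr 1
  rcases Int.even_or_odd n with h | h
  · rw [h.neg_one_zpow, Even.neg_one_pow]
    rw [sqe, Nat.even_pow]; exact ⟨Int.natAbs_even.2 h, two_ne_zero⟩
  · rw [h.neg_one_zpow, Odd.neg_one_pow]
    rw [sqe]; exact (Int.natAbs_odd.2 h).pow

lemma phi_neg_prod {q : ℝ} (h0 : q ≠ 0) (hq : |q| < 1) :
    phi (-q) = eulerE q ^ 2 / eulerE (q^2) := by
  have h2 := abs_pow_lt hq two_ne_zero
  have h := jtp (q := q^2) (z := q⁻¹) (by positivity) h2 (by positivity)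
  have e : (fun j : ℤ => tc (q^2) j * q⁻¹ ^ j) = fun j => (-q) ^ sqe j := by
    ext j; rw [neg_pow_sqe, pow_sqe h0, tc]; ring
  rw [e] at h
  rw [phi, th, h.tsum_eq, inv_inv]
  have h3 : q⁻¹ * q^2 = q := by field_simp
  have h4 := qp_split q hq
  rw [← eulerE_eq_qp, ← sq, ← eulerE_eq_qp] at h4
  rw [h3, h4]
  have := eulerE_ne_zero h2
  field_simp

lemma qp_neg_self {q : ℝ} (hq : |q| < 1) : qp (-q) q = eulerE (q^2) / eulerE q := by
  have := qp_mul_neg q hq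
  rw [← eulerE_eq_qp, ← eulerE_eq_qp] at this
  rw [← this]; field_simp [eulerE_ne_zero hq]

lemma Psi_prod {q : ℝ} (h0 : q ≠ 0) (hq : |q| < 1) :
    Psi q = 2 * eulerE (q^2) ^ 2 / eulerE q := by
  have h := jtp (q := q) (z := -1) h0 hq (by norm_num)
  have e : (fun j : ℤ => tc q j * (-1) ^ j) = fun j => q ^ tri j := by
    ext j; rw [tc]
    have : ((-1:ℝ)^j) * (-1)^j = 1 := by rw [← mul_zpow]; simp
    linear_combination q ^ tri j * this
  rw [e] at h
  rw [Psi, th, h.tsum_eq]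
  have := qp_succ (-1) hq
  rw [show (-1:ℝ)⁻¹ = -1 by norm_num, this, neg_one_mul, qp_neg_self hq]
  field_simp [eulerE_ne_zero hq]
  ring

lemma tsum_refl (f : ℤ → ℝ) : ∑' j, f (-1 - j) = ∑' j, f j :=
  (Equiv.subLeft (-1:ℤ)).tsum_eq f

lemma tsum_zero_of_anti {f : ℤ → ℝ} (h : ∀ j, f (-1-j) = - f j) : ∑' j, f j = 0 := by
  have := tsum_refl f
  simp_rw [h, tsum_neg] at this
  linarith

lemma neg_one_zpow_refl (j : ℤ) : (-1:ℝ) ^ (-1 - j) = - (-1) ^ j := by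
  rw [zpow_sub₀ (by norm_num)]
  rcases Int.even_or_odd j with h | h <;> simp [h.neg_one_zpow]

lemma rot {a b : ℤ → ℝ} (ha : Summable fun i => ‖a i‖) (hb : Summable fun i => ‖b i‖) :
    ∑' p : ℤ × ℤ, a (p.1 + p.2) * b (p.1 - p.2) =
      ((∑' i, a i) * (∑' i, b i) + (∑' i, (-1) ^ i * a i) * (∑' i, (-1) ^ i * b i)) / 2 := by
  have ha' : Summable fun i : ℤ => ‖(-1) ^ i * a i‖ := ha.congr fun i => by simp
  have hb' : Summable fun i : ℤ => ‖(-1) ^ i * b i‖ := hb.congr fun i => by simp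
  have s1 := summable_mul_of_summable_norm ha hb
  have s2 := summable_mul_of_summable_norm ha' hb'
  rw [tsum_mul_tsum_of_summable_norm ha hb, tsum_mul_tsum_of_summable_norm ha' hb',
    ← s1.tsum_add s2, ← tsum_div_const]
  let g : ℤ × ℤ → ℤ × ℤ := fun p => (p.1 + p.2, p.1 - p.2)
  have hg : Function.Injective g := by
    rintro ⟨x, y⟩ ⟨x', y'⟩ h
    simp only [g, Prod.mk.injEq] at h ⊢
    omega
  rw [← hg.tsum_eq (f := fun z : ℤ × ℤ => (a z.1 * b z.2 + (-1) ^ z.1 * a z.1 * ((-1) ^ z.2 * b z.2)) / 2)]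
  · congr 1; ext ⟨x, y⟩
    simp only [g]
    have : (-1:ℝ) ^ (x+y) * (-1) ^ (x-y) = 1 := by
      rw [← zpow_add₀ (by norm_num), Even.neg_one_zpow]
      exact ⟨x, by ring⟩
    linear_combination (-a (x+y) * b (x-y) / 2) * this
  · intro ⟨i, j⟩ h
    by_contra hn
    apply h
    have hodd : Odd (i + j) := by
      rw [← Int.not_even_iff_odd]
      rintro ⟨x, hx⟩
      exact hn ⟨(x, i - x), by simp only [g, Prod.mk.injEq]; omega⟩
    have : (-1:ℝ) ^ i * (-1) ^ j = -1 := by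
      rw [← zpow_add₀ (by norm_num), hodd.neg_one_zpow]
    simp only
    linear_combination (a i * b j / 2) * this

lemma Psi_alt {q : ℝ} : ∑' i : ℤ, (-1) ^ i * q ^ tri i = 0 :=
  tsum_zero_of_anti fun j => by rw [tri_refl, neg_one_zpow_refl]; ring

lemma pow_tri_rot (q : ℝ) (x y : ℤ) :
    q ^ tri (x+y) * q ^ tri (x-y) = (q^2) ^ tri x * q ^ sqe y := by
  rw [← pow_mul, ← pow_add, ← pow_add]
  congr 1
  zify
  have h1 := two_tri (x+y); have h2 := two_tri (x-y); have h3 := two_tri x; have h4 := sqe_cast y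
  nlinarith

lemma Psi_sq {q : ℝ} (h0 : q ≠ 0) (hq : |q| < 1) : Psi q ^ 2 = 2 * Psi (q^2) * phi q := by
  have h2 := abs_pow_lt hq two_ne_zero
  have h := rot (adm_tri.norm h0 hq) (adm_tri.norm h0 hq)
  simp_rw [pow_tri_rot, Psi_alt] at h
  rw [← tsum_mul_tsum_of_summable_norm (adm_tri.norm (by positivity) h2) (adm_sqe.norm h0 hq)] at h
  simp only [phi, Psi, th]
  linear_combination -2 * h

lemma phi_add {q : ℝ} (h0 : q ≠ 0) (hq : |q| < 1) :
    phi q ^ 2 + phi (-q) ^ 2 = 2 * phi (q^2) ^ 2 := by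
  have h2 := abs_pow_lt hq two_ne_zero
  have h := rot (adm_sqe.norm h0 hq) (adm_sqe.norm h0 hq)
  have e : ∀ p : ℤ × ℤ, q ^ sqe (p.1 + p.2) * q ^ sqe (p.1 - p.2) =
      (q^2) ^ sqe p.1 * (q^2) ^ sqe p.2 := by
    rintro ⟨x, y⟩
    rw [← pow_mul, ← pow_mul, ← pow_add, ← pow_add]
    congr 1
    zify; simp only [sqe_cast]; ring
  simp_rw [e, ← neg_pow_sqe] at h
  rw [← tsum_mul_tsum_of_summable_norm (adm_sqe.norm (by positivity) h2)
    (adm_sqe.norm (by positivity) h2)] at h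
  simp only [phi, th]
  linear_combination -2 * h

set_option maxHeartbeats 2000000 in
lemma phi_sub {q : ℝ} (h0 : q ≠ 0) (hq : |q| < 1) :
    phi q ^ 2 - phi (-q) ^ 2 = 2 * q * Psi (q^4) ^ 2 := by
  have h4 := abs_pow_lt hq (n := 4) (by norm_num)
  have hs := adm_sqe.norm h0 hq
  have hs' : Summable fun i : ℤ => ‖q ^ sqe (i+1)‖ :=
    (Equiv.addRight (1:ℤ)).summable_iff.2 hs
  have h := rot hs' hs
  have e : ∀ p : ℤ × ℤ, q ^ sqe (p.1 + p.2 + 1) * q ^ sqe (p.1 - p.2) =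
      q * ((q^4) ^ tri p.1 * (q^4) ^ tri p.2) := by
    rintro ⟨x, y⟩
    rw [← pow_mul, ← pow_mul, ← pow_add, ← pow_add, ← pow_succ']
    congr 1
    zify; simp only [sqe_cast]
    have h1 := two_tri x; have h2 := two_tri y
    linear_combination -2 * h1 - 2 * h2
  have e1 : ∑' i : ℤ, q ^ sqe (i+1) = phi q := (Equiv.addRight (1:ℤ)).tsum_eq fun i => q ^ sqe i
  have e2 : ∑' i : ℤ, (-1) ^ i * q ^ sqe (i+1) = - phi (-q) := by
    have := (Equiv.addRight (1:ℤ)).tsum_eq fun i => (-q) ^ sqe i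
    rw [phi, th, ← this, ← tsum_neg]
    congr 1; ext i
    simp only [Equiv.coe_addRight]
    rw [neg_pow_sqe, zpow_add_one₀ (by norm_num)]; ring
  rw [e1, e2] at h
  simp_rw [e, ← neg_pow_sqe] at h
  rw [tsum_mul_left, ← tsum_mul_tsum_of_summable_norm (adm_tri.norm (by positivity) h4)
    (adm_tri.norm (by positivity) h4)] at h
  have e3 : ∑' i : ℤ, q ^ sqe i = phi q := rfl
  have e4 : ∑' i : ℤ, (-q) ^ sqe i = phi (-q) := rfl
  have e5 : ∑' i : ℤ, (q^4) ^ tri i = Psi (q^4) := rfl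
  rw [e3, e4, e5] at h
  linear_combination -2 * h

lemma abstruse {q : ℝ} (h0 : q ≠ 0) (hq : |q| < 1) :
    phi q ^ 4 - phi (-q) ^ 4 = q * Psi (q^2) ^ 4 := by
  have h1 := phi_sub h0 hq
  have h2 := phi_add h0 hq
  have h3 := Psi_sq (q := q^2) (by positivity) (abs_pow_lt hq two_ne_zero)
  rw [← pow_mul] at h3
  norm_num at h3
  linear_combination (phi q ^ 2 + phi (-q)^2) * h1 + 2 * q * Psi (q^4)^2 * h2
    - q * (Psi (q^2)^2 + 2 * Psi (q^4) * phi (q^2)) * h3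

lemma wronski {q : ℝ} (h0 : q ≠ 0) (hq : |q| < 1) :
    phi q * (Psi (q^2) + 8 * Dth tri (q^2)) - 4 * Psi (q^2) * Dth sqe q = 2 * eulerE q ^ 6 := by
  have h2 := abs_pow_lt hq two_ne_zero
  have h02 : q^2 ≠ 0 := by positivity
  have ht := summable_tri_int (abs_pos.2 h0) hq
  have hn : Summable fun i : ℤ => ‖(2 * (i:ℝ) + 1) * q ^ tri i‖ := by
    refine Summable.of_nonneg_of_le (fun _ => norm_nonneg _) (fun i => ?_)
      ((ht.mul_left 2).add (adm_tri.norm h0 hq))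
    rw [norm_mul, norm_pow, Real.norm_eq_abs, Real.norm_eq_abs]
    have : |2 * (i:ℝ) + 1| ≤ 2 * |(i:ℝ)| + 1 := by
      refine (abs_add_le _ _).trans ?_
      rw [abs_mul]; simp
    nlinarith [pow_nonneg (abs_nonneg q) (tri i)]
  have h := rot hn hn
  have z1 : ∑' i : ℤ, (2 * (i:ℝ) + 1) * q ^ tri i = 0 :=
    tsum_zero_of_anti fun j => by rw [tri_refl]; push_cast; ring
  have z2 : ∑' i : ℤ, (-1) ^ i * ((2 * (i:ℝ) + 1) * q ^ tri i) = 2 * eulerE q ^ 3 := by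
    have hj := jac h0 hq
    have hs : HasSum (fun i : ℤ => (-1) ^ i * q ^ tri i) 0 := by
      rw [← Psi_alt (q := q)]
      refine (Summable.of_norm ?_).hasSum
      exact (adm_tri.norm h0 hq).congr fun i => by simp
    have := (hj.mul_left 2).add hs
    rw [add_zero] at this
    rw [← this.tsum_eq]
    congr 1; ext i; unfold tc; ring
  rw [z1, z2] at h
  have e : ∀ p : ℤ × ℤ, (2 * ((p.1 + p.2 : ℤ):ℝ) + 1) * q ^ tri (p.1 + p.2) *
      ((2 * ((p.1 - p.2 : ℤ):ℝ) + 1) * q ^ tri (p.1 - p.2)) =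
      ((q^2) ^ tri p.1 + 8 * (tri p.1 * (q^2) ^ tri p.1)) * q ^ sqe p.2
        - (q^2) ^ tri p.1 * (4 * (sqe p.2 * q ^ sqe p.2)) := by
    rintro ⟨x, y⟩
    have := pow_tri_rot q x y
    simp only
    have t1 : 2 * (tri x : ℝ) = x * (x+1) := by exact_mod_cast two_tri x
    have t2 : (sqe y : ℝ) = y^2 := by exact_mod_cast sqe_cast y
    rw [t2]
    push_cast
    linear_combination ((2 * ((x:ℝ)+y)+1) * (2*((x:ℝ)-y)+1)) * this - 4 * (q^2)^tri x * q ^ sqe y * t1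
  simp_rw [e] at h
  have a1 := adm_tri.norm h02 h2
  have a2 := (adm_tri.norm_mul h02 h2).mul_left 8
  have a3 : Summable fun i => ‖(q^2) ^ tri i + 8 * (tri i * (q^2) ^ tri i)‖ := by
    refine Summable.of_nonneg_of_le (fun _ => norm_nonneg _) (fun i => ?_) (a1.add a2)
    refine (norm_add_le _ _).trans ?_
    rw [norm_mul 8]; simp
  have b1 := adm_sqe.norm h0 hq
  have b2 : Summable fun i => ‖4 * ((sqe i : ℝ) * q ^ sqe i)‖ :=
    ((adm_sqe.norm_mul h0 hq).mul_left 4).congr fun i => by rw [norm_mul 4]; simp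
  rw [(summable_mul_of_summable_norm a3 b1).tsum_sub (summable_mul_of_summable_norm a1 b2),
    ← tsum_mul_tsum_of_summable_norm a3 b1, ← tsum_mul_tsum_of_summable_norm a1 b2,
    tsum_mul_left, (a1.of_norm).tsum_add ((adm_tri.norm_mul h02 h2).of_norm.mul_left 8),
    tsum_mul_left] at h
  simp only [phi, Psi, th, Dth]
  linear_combination h

open Real

noncomputable def gw (ε p : ℝ) (A b : ℤ) (n : ℤ) : ℝ := ε ^ n * p ^ (A * n ^ 2 + b * n)

noncomputable def gf (ε p : ℝ) (b : ℤ) : ℝ := ∑' n : ℤ, gw ε p 5 b n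

lemma gw_eq {p : ℝ} (hp : 0 < p) (ε : ℝ) (A : ℕ) (b n : ℤ) :
    gw ε p A b n = ε ^ n * ((p ^ (2*A)) ^ tri n * (p ^ (b - A)) ^ n) := by
  unfold gw
  congr 1
  rw [← pow_mul, ← zpow_natCast, ← zpow_mul, ← zpow_add₀ hp.ne']
  congr 1
  push_cast
  linear_combination (-(A:ℤ)) * two_tri n

lemma eps_zpow_abs {ε : ℝ} (he : ε ^ 2 = 1) (n : ℤ) : |ε ^ n| = 1 := by
  have : |ε| = 1 := by
    rcases sq_eq_sq_iff_eq_or_eq_neg.1 (he.trans (one_pow 2).symm) with h | h <;> simp [h]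
  rw [abs_zpow, this, one_zpow]

lemma gw_norm {p : ℝ} (hp : 0 < p) (hp1 : p < 1) {ε : ℝ} (he : ε ^ 2 = 1) {A : ℕ} (hA : A ≠ 0)
    (b : ℤ) : Summable fun n : ℤ => ‖gw ε p A b n‖ := by
  have := summable_tri_zpow (r := p ^ (2*A)) (by positivity)
    (pow_lt_one₀ hp.le hp1 (by positivity)) (w := p ^ (b - A)) (by positivity)
  refine this.congr fun n => ?_
  rw [gw_eq hp, norm_mul, Real.norm_eq_abs, eps_zpow_abs he, one_mul, Real.norm_of_nonneg]
  positivity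

lemma gf_prod {p : ℝ} (hp : 0 < p) (hp1 : p < 1) {ε : ℝ} (he : ε ^ 2 = 1) (b : ℤ) :
    gf ε p b = eulerE (p ^ 10) *
      (qp (-ε * p ^ (5 + b)) (p ^ 10) * qp (-ε * p ^ (5 - b)) (p ^ 10)) := by
  have he0 : ε ≠ 0 := by rintro rfl; norm_num at he
  have hlt : |p ^ 10| < 1 := by
    rw [abs_of_pos (by positivity)]; exact pow_lt_one₀ hp.le hp1 (by norm_num)
  have h := (jtp (q := p ^ 10) (z := -ε * p ^ (b - 5)) (by positivity) hlt
    (mul_ne_zero (neg_ne_zero.2 he0) (by positivity))).tsum_eq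
  have e1 : -ε * p ^ (b - 5) * p ^ 10 = -ε * p ^ (5 + b) := by
    rw [mul_assoc, ← zpow_natCast, ← zpow_add₀ hp.ne']
    congr 2; push_cast; ring
  have e2 : (-ε * p ^ (b - 5))⁻¹ = -ε * p ^ (5 - b) := by
    rw [mul_inv, ← zpow_neg, neg_sub]
    congr 1
    exact inv_eq_of_mul_eq_one_left (by linear_combination he)
  rw [e1, e2] at h
  rw [← h, gf]
  congr 1; ext n
  have := gw_eq hp ε 5 b n
  norm_num at this
  rw [this, tc, neg_mul, neg_eq_neg_one_mul (ε * p ^ (b - 5)), mul_zpow, mul_zpow]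
  have h1 : ((-1:ℝ) ^ n) * (-1) ^ n = 1 := by rw [← mul_zpow]; norm_num
  linear_combination (-(ε ^ n * (p ^ 10) ^ tri n * (p ^ (b - 5)) ^ n)) * h1

lemma gf_neg {p : ℝ} {ε : ℝ} (he : ε ^ 2 = 1) (b : ℤ) : gf ε p (-b) = gf ε p b := by
  rw [gf, gf, ← (Equiv.neg ℤ).tsum_eq]
  congr 1; ext n
  simp only [Equiv.neg_apply, gw]
  congr 1
  · rw [zpow_neg, ← inv_zpow]
    congr 1
    exact inv_eq_of_mul_eq_one_left (by linear_combination he)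
  · congr 1; ring

lemma gf_shift {p : ℝ} (hp : 0 < p) {ε : ℝ} (he : ε ^ 2 = 1) (b : ℤ) :
    gf ε p (b + 10) = ε * p ^ (-(5 + b)) * gf ε p b := by
  have he0 : ε ≠ 0 := by rintro rfl; norm_num at he
  have : gf ε p b = ε * p ^ (5 + b) * gf ε p (b + 10) := by
    rw [gf, gf, ← (Equiv.addRight (1:ℤ)).tsum_eq, ← tsum_mul_left]
    congr 1; ext n
    simp only [Equiv.coe_addRight, gw]
    rw [zpow_add_one₀ he0]
    have : (5:ℤ) * (n + 1) ^ 2 + b * (n + 1) = (5 + b) + (5 * n ^ 2 + (b + 10) * n) := by ring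
    rw [this, zpow_add₀ hp.ne']
    ring
  rw [this, zpow_neg]
  have : p ^ (5 + b) ≠ 0 := by positivity
  field_simp
  linear_combination (-gf ε p (b + 10)) * he

def gequiv : Fin 5 × (ℤ × ℤ) ≃ ℤ × ℤ where
  toFun x := (2 * x.2.1 + x.2.2 + (x.1 : ℕ), 2 * x.2.2 - x.2.1 + (x.1 : ℕ))
  invFun y := (⟨((2 * y.1 - y.2) % 5).toNat, by omega⟩,
    ((2 * y.1 - y.2) / 5, (y.1 + 2 * y.2 - 3 * ((2 * y.1 - y.2) % 5)) / 5))
  left_inv := by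
    rintro ⟨⟨a, ha⟩, m, n⟩
    simp only [Prod.mk.injEq, Fin.mk.injEq]
    refine ⟨?_, ?_, ?_⟩ <;> omega
  right_inv := by
    rintro ⟨u, v⟩
    simp only [Prod.mk.injEq]
    refine ⟨?_, ?_⟩ <;> omega

lemma gauss {p : ℝ} (hp : 0 < p) (hp1 : p < 1) {ε : ℝ} (he : ε ^ 2 = 1) (c : ℤ) :
    (∑' u : ℤ, gw ε p 1 c u) ^ 2 =
      ∑ a : Fin 5, gf ε p (2 * (a:ℕ) + c) * gf ε p (6 * (a:ℕ) + 3 * c) *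
        p ^ (2 * ((a:ℕ):ℤ) * ((a:ℕ) + c)) := by
  have he0 : ε ≠ 0 := by rintro rfl; norm_num at he
  have hs := gw_norm hp hp1 he one_ne_zero c
  simp only [Nat.cast_one] at hs
  have hss := summable_mul_of_summable_norm hs hs
  rw [sq, tsum_mul_tsum_of_summable_norm hs hs, ← gequiv.tsum_eq]
  have hss' : Summable fun x => gw ε p 1 c (gequiv x).1 * gw ε p 1 c (gequiv x).2 :=
    gequiv.summable_iff.2 hss
  rw [Summable.tsum_prod hss', tsum_fintype]
  refine Finset.sum_congr rfl fun a _ => ?_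
  have h1 := gw_norm hp hp1 he (A := 5) (by norm_num) (2 * (a:ℕ) + c)
  have h2 := gw_norm hp hp1 he (A := 5) (by norm_num) (6 * (a:ℕ) + 3 * c)
  simp only [Nat.cast_ofNat] at h1 h2
  rw [gf, gf, tsum_mul_tsum_of_summable_norm h1 h2, ← tsum_mul_right]
  congr 1; ext ⟨m, n⟩
  simp only [gequiv, Equiv.coe_fn_mk, gw]
  generalize ((a:ℕ):ℤ) = a
  have e1 : ε ^ (2 * m + n + a) * ε ^ (2 * n - m + a) = ε ^ m * ε ^ n := by
    rw [← zpow_add₀ he0, ← zpow_add₀ he0]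
    have : 2 * m + n + a + (2 * n - m + a) = (m + n) + 2 * (n + a) := by ring
    rw [this, zpow_add₀ he0, zpow_mul]
    have : ε ^ (2:ℤ) = 1 := by exact_mod_cast he
    rw [this, one_zpow, mul_one]
  have e2 : p ^ (1 * (2 * m + n + a) ^ 2 + c * (2 * m + n + a)) *
      p ^ (1 * (2 * n - m + a) ^ 2 + c * (2 * n - m + a)) =
      p ^ (5 * m ^ 2 + (2 * a + c) * m) * p ^ (5 * n ^ 2 + (6 * a + 3 * c) * n) *
       p ^ (2 * a * (a + c)) := by
    rw [← zpow_add₀ hp.ne', ← zpow_add₀ hp.ne', ← zpow_add₀ hp.ne']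
    congr 1; ring
  calc _ = (ε ^ (2 * m + n + a) * ε ^ (2 * n - m + a)) *
      (p ^ (1 * (2 * m + n + a) ^ 2 + c * (2 * m + n + a)) *
      p ^ (1 * (2 * n - m + a) ^ 2 + c * (2 * n - m + a))) := by ring
    _ = _ := by rw [e1, e2]; ring

lemma gauss1 {p : ℝ} (hp : 0 < p) (hp1 : p < 1) :
    (∑' u : ℤ, gw 1 p 1 1 u) ^ 2 = 4 * (gf 1 p 1 * gf 1 p 3) + p ^ 2 * gf 1 p 5 ^ 2 := by
  have he : (1:ℝ)^2 = 1 := one_pow 2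
  rw [gauss hp hp1 he 1, Fin.sum_univ_five]
  have n9 := gf_shift hp he (-1); have n7 := gf_shift hp he (-3)
  have n15 := gf_shift hp he 5
  have n11 := gf_shift hp he 1; have n21 := gf_shift hp he 11
  have n17 := gf_shift hp he 7; have n27 := gf_shift hp he 17
  norm_num [gf_neg] at n9 n7 n15 n11 n21 n17 n27
  norm_num [gf_neg, n9, n7, n15, n11, n21, n17, n27]
  field_simp
  ring

lemma gauss2 {p : ℝ} (hp : 0 < p) (hp1 : p < 1) :
    (∑' u : ℤ, gw (-1) p 1 0 u) ^ 2 = gf (-1) p 0 ^ 2 - 4 * p * (gf (-1) p 2 * gf (-1) p 4) := by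
  have he : (-1:ℝ)^2 = 1 := by norm_num
  rw [gauss hp hp1 he 0, Fin.sum_univ_five]
  have n6 := gf_shift hp he (-4); have n8 := gf_shift hp he (-2)
  have n12 := gf_shift hp he 2; have n18 := gf_shift hp he 8
  have n14 := gf_shift hp he 4; have n24 := gf_shift hp he 14
  norm_num [gf_neg he] at n6 n8 n12 n18 n14 n24
  norm_num [gf_neg he]
  rw [n24, n14, n18, n8, n12, n6]
  field_simp
  ring

lemma I1aux {p : ℝ} (hp : 0 < p) (hp1 : p < 1) :
    Psi (p^2) ^ 2 = 4 * (eulerE (p^10) ^ 2 * (eulerE (p^4) / eulerE (p^2)) /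
      (eulerE (p^20) / eulerE (p^10))) + p^2 * Psi (p^10) ^ 2 := by
  have hp' : |p| < 1 := by rwa [abs_of_pos hp]
  have h2 := abs_pow_lt hp' (n := 2) (by norm_num)
  have h10 := abs_pow_lt hp' (n := 10) (by norm_num)
  have h20 := abs_pow_lt hp' (n := 20) (by norm_num)
  have h := gauss1 hp hp1
  have e1 : ∑' u : ℤ, gw 1 p 1 1 u = Psi (p^2) := by
    unfold Psi th
    congr 1; ext n
    have := gw_eq hp 1 1 1 n
    norm_num at this
    exact this
  have e2 : gf 1 p 5 = Psi (p^10) := by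
    unfold Psi th gf
    congr 1; ext n
    have := gw_eq hp 1 5 5 n
    norm_num at this
    exact this
  have f1 := gf_prod hp hp1 (one_pow 2) 1
  have f3 := gf_prod hp hp1 (one_pow 2) 3
  have s := qp_split5 (-p^2) h2
  have n1 := qp_neg_self h2
  have n5 := qp_neg_self h10
  have a1 : (p^2)^5 = p^10 := by ring
  have a2 : -p^2 * p^2 = -p^4 := by ring
  have a3 : -p^2 * (p^2)^2 = -p^6 := by ring
  have a4 : -p^2 * (p^2)^3 = -p^8 := by ring
  have a5 : -p^2 * (p^2)^4 = -p^10 := by ring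
  have a6 : (p^2)^2 = p^4 := by ring
  have a7 : (p^10)^2 = p^20 := by ring
  rw [a1, a2, a3, a4, a5, n1, n5, a6, a7] at s
  norm_num at f1 f3
  have z1 : p ^ (6:ℤ) = p^6 := rfl
  have z2 : p ^ (4:ℤ) = p^4 := rfl
  have z3 : p ^ (8:ℤ) = p^8 := rfl
  have z4 : p ^ (2:ℤ) = p^2 := rfl
  try rw [z1, z2] at f1
  try rw [z3, z4] at f3
  rw [e1, e2, f1, f3] at h
  rw [h, s]
  have := eulerE_ne_zero h10
  have := eulerE_ne_zero h20
  field_simp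

lemma I2aux {p : ℝ} (hp : 0 < p) (hp1 : p < 1) :
    phi (-p) ^ 2 = phi (-p^5) ^ 2 - 4 * p * (eulerE (p^10) ^ 2 * (eulerE p / eulerE (p^2)) /
      (eulerE (p^5) / eulerE (p^10))) := by
  have hp' : |p| < 1 := by rwa [abs_of_pos hp]
  have h2 := abs_pow_lt hp' (n := 2) (by norm_num)
  have h5 := abs_pow_lt hp' (n := 5) (by norm_num)
  have h10 := abs_pow_lt hp' (n := 10) (by norm_num)
  have h := gauss2 hp hp1
  have e1 : ∑' u : ℤ, gw (-1) p 1 0 u = phi (-p) := by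
    unfold phi th
    congr 1; ext n
    rw [neg_pow_sqe, gw, ← zpow_natCast, sqe_cast]
    congr 2; ring
  have e2 : gf (-1) p 0 = phi (-p^5) := by
    unfold phi th gf
    congr 1; ext n
    rw [neg_pow_sqe, gw, ← pow_mul, ← zpow_natCast]
    push_cast [sqe_cast]
    congr 2; ring
  have hm : (-1:ℝ)^2 = 1 := by norm_num
  have f2 := gf_prod hp hp1 hm 2
  have f4 := gf_prod hp hp1 hm 4
  have s := qp_split5 p h2
  have n1 := qp_split p hp'
  have n5 := qp_split (p^5) h5
  have a1 : (p^2)^5 = p^10 := by ring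
  have a2 : p * p^2 = p^3 := by ring
  have a3 : p * (p^2)^2 = p^5 := by ring
  have a4 : p * (p^2)^3 = p^7 := by ring
  have a5 : p * (p^2)^4 = p^9 := by ring
  have a6 : p * p = p^2 := by ring
  have a7 : (p^5)^2 = p^10 := by ring
  have a8 : p^5*p^5 = p^10 := by ring
  rw [a1, a2, a3, a4, a5] at s
  rw [a6, ← eulerE_eq_qp, ← eulerE_eq_qp] at n1
  rw [a7, a8, ← eulerE_eq_qp, ← eulerE_eq_qp] at n5
  norm_num at f2 f4
  have z1 : p ^ (7:ℤ) = p^7 := rfl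
  have z2 : p ^ (3:ℤ) = p^3 := rfl
  have z3 : p ^ (9:ℤ) = p^9 := rfl
  try rw [z1, z2] at f2
  try rw [z3] at f4
  rw [e1, e2, f2, f4] at h
  have b2 := eulerE_ne_zero h2
  have b5 := eulerE_ne_zero h5
  have b10 := eulerE_ne_zero h10
  have c5 : qp (p^5) (p^10) ≠ 0 := by
    intro h; rw [h] at n5; simp at n5; exact b5 n5
  rw [h, n1, n5, s]
  field_simp

lemma I1 {q : ℝ} (hq : 0 < q) (hq1 : q < 1) :
    eulerE (q^2)^4 / eulerE q ^ 2 - q * eulerE (q^10)^4 / eulerE (q^5)^2 =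
      eulerE (q^2) * eulerE (q^5)^3 / (eulerE q * eulerE (q^10)) := by
  have hq' : |q| < 1 := by rwa [abs_of_pos hq]
  have h := I1aux (p := √q) (Real.sqrt_pos.2 hq)
    (by rw [Real.sqrt_lt' one_pos]; simpa using hq1)
  have r2 : √q ^ 2 = q := Real.sq_sqrt hq.le
  have r4 : √q ^ 4 = q ^ 2 := by rw [← r2]; simp only [Real.sqrt_sq (Real.sqrt_nonneg q)]; ring
  have r10 : √q ^ 10 = q ^ 5 := by rw [← r2]; simp only [Real.sqrt_sq (Real.sqrt_nonneg q)]; ring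
  have r20 : √q ^ 20 = q ^ 10 := by rw [← r2]; simp only [Real.sqrt_sq (Real.sqrt_nonneg q)]; ring
  rw [r2, r4, r10, r20, Psi_prod hq.ne' hq', Psi_prod (by positivity)
    (abs_pow_lt hq' (by norm_num)), ← pow_mul] at h
  norm_num at h
  have b1 := eulerE_ne_zero hq'
  have b2 := eulerE_ne_zero (abs_pow_lt hq' (n := 5) (by norm_num))
  have b3 := eulerE_ne_zero (abs_pow_lt hq' (n := 10) (by norm_num))
  field_simp at h ⊢
  linear_combination h / 4

lemma I2 {q : ℝ} (hq : 0 < q) (hq1 : q < 1) :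
    eulerE (q^5)^4 / eulerE (q^10) ^ 2 - eulerE q^4 / eulerE (q^2)^2 =
      4 * q * eulerE q * eulerE (q^10)^3 / (eulerE (q^2) * eulerE (q^5)) := by
  have hq' : |q| < 1 := by rwa [abs_of_pos hq]
  have h := I2aux hq hq1
  rw [phi_neg_prod hq.ne' hq', phi_neg_prod (by positivity)
    (abs_pow_lt hq' (by norm_num)), ← pow_mul] at h
  norm_num at h
  have b1 := eulerE_ne_zero (abs_pow_lt hq' (n := 2) (by norm_num))
  have b2 := eulerE_ne_zero (abs_pow_lt hq' (n := 5) (by norm_num))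
  have b3 := eulerE_ne_zero (abs_pow_lt hq' (n := 10) (by norm_num))
  field_simp at h ⊢
  linear_combination -h

open Real

lemma phi_prod {q : ℝ} (h0 : q ≠ 0) (hq : |q| < 1) : phi q = eulerE (-q)^2 / eulerE (q^2) := by
  have := phi_neg_prod (q := -q) (neg_ne_zero.2 h0) (by rwa [abs_neg])
  rwa [neg_neg, neg_sq] at this

lemma phi_ne {q : ℝ} (h0 : q ≠ 0) (hq : |q| < 1) : phi q ≠ 0 := by
  rw [phi_prod h0 hq]
  have b1 := eulerE_ne_zero (q := -q) (by rwa [abs_neg])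
  have b2 := eulerE_ne_zero (abs_pow_lt hq (n := 2) (by norm_num))
  positivity

lemma Psi_ne {q : ℝ} (h0 : q ≠ 0) (hq : |q| < 1) : Psi q ≠ 0 := by
  rw [Psi_prod h0 hq]
  have b1 := eulerE_ne_zero hq
  have b2 := eulerE_ne_zero (abs_pow_lt hq (n := 2) (by norm_num))
  positivity

lemma wr2 {q : ℝ} (h0 : q ≠ 0) (hq : |q| < 1) :
    1 + 8 * (Dth tri (q^2) / Psi (q^2)) - 4 * (Dth sqe q / phi q) = phi (-q) ^ 4 := by
  have h := wronski h0 hq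
  have h1 := Psi_sq h0 hq
  have b1 := eulerE_ne_zero hq
  have b2 := eulerE_ne_zero (abs_pow_lt hq (n := 2) (by norm_num))
  have b3 := phi_ne h0 hq
  have b4 := Psi_ne (q := q^2) (by positivity) (abs_pow_lt hq (n := 2) (by norm_num))
  have e : Psi (q^2) * phi q = 2 * eulerE (q^2)^4 / eulerE q^2 := by
    rw [Psi_prod h0 hq] at h1
    field_simp at h1 ⊢
    linear_combination -h1
  have h2 : (1 + 8 * (Dth tri (q^2) / Psi (q^2)) - 4 * (Dth sqe q / phi q)) *
      (Psi (q^2) * phi q) = 2 * eulerE q ^ 6 := by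
    rw [← h]; field_simp
  rw [e] at h2
  rw [phi_neg_prod h0 hq]
  field_simp at h2 ⊢
  linear_combination h2

lemma D_Psi_sq {q : ℝ} (h0 : q ≠ 0) (hq : |q| < 1) :
    Psi q * Dth tri q = 2 * Dth tri (q^2) * phi q + Psi (q^2) * Dth sqe q := by
  obtain ⟨a, ha, ha'⟩ := adm_tri.hasDerivAt hq
  obtain ⟨b, hb, hb'⟩ := adm_tri.hasDerivAt (abs_pow_lt hq (n := 2) (by norm_num))
  obtain ⟨c, hc, hc'⟩ := adm_sqe.hasDerivAt hq
  have l := ha.pow 2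
  have r := ((HasDerivAt.comp (h := fun x : ℝ => x ^ 2) q hb (hasDerivAt_pow 2 q)).mul hc).const_mul 2
  have ev : (fun x => 2 * (Psi (x^2) * phi x)) =ᶠ[nhds q] fun x => Psi x ^ 2 := by
    have : ∀ᶠ x in nhds q, x ≠ 0 ∧ |x| < 1 :=
      (isOpen_ne.eventually_mem h0).and (continuous_abs.isOpen_preimage _ isOpen_Iio |>.mem_nhds hq)
    filter_upwards [this] with x hx
    rw [Psi_sq hx.1 hx.2]; ring
  have u := (l.congr_of_eventuallyEq ev).unique r
  simp only [Function.comp] at u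
  norm_num at u
  have u2 : Psi q * (q * a) = 2 * (q^2 * b) * phi q + Psi (q^2) * (q * c) := by
    linear_combination q * u / 2
  rwa [ha', hb', hc'] at u2

lemma P2val {q : ℝ} (h0 : q ≠ 0) (hq : |q| < 1) :
    1 + 8 * (Dth tri q / Psi q) - 8 * (Dth sqe (-q) / phi (-q)) =
      phi (-q)^4 + 2 * q * Psi (q^2)^4 := by
  have w1 := wr2 h0 hq
  have hn0 : -q ≠ 0 := neg_ne_zero.2 h0
  have hn : |-q| < 1 := by rwa [abs_neg]
  have w2 := wr2 hn0 hn
  rw [neg_sq, neg_neg] at w2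
  have ab := abstruse h0 hq
  have d := D_Psi_sq h0 hq
  have s := Psi_sq h0 hq
  have b1 := phi_ne h0 hq
  have b2 := Psi_ne (q := q^2) (by positivity) (abs_pow_lt hq (n := 2) (by norm_num))
  have b3 := Psi_ne h0 hq
  have e : Dth tri q / Psi q = Dth tri (q^2) / Psi (q^2) + Dth sqe q / phi q / 2 := by
    have : Dth tri q / Psi q = Psi q * Dth tri q / Psi q^2 := by field_simp
    rw [this, d, s]
    field_simp
  rw [e]
  linear_combination 2 * w2 - w1 + 2 * ab

lemma P2sq {q : ℝ} (h0 : q ≠ 0) (hq : |q| < 1) :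
    (phi (-q)^4 + 2 * q * Psi (q^2)^4)^2 =
      eulerE q^16 / eulerE (q^2)^8 + 64 * q * eulerE (q^2)^16 / eulerE q^8 := by
  have ab := abstruse h0 hq
  have s := Psi_sq h0 hq
  have e1 : phi (-q)^8 = eulerE q^16 / eulerE (q^2)^8 := by
    rw [phi_neg_prod h0 hq, div_pow]; ring
  have e2 : Psi q ^ 8 = 256 * (eulerE (q^2)^16 / eulerE q^8) := by
    rw [Psi_prod h0 hq, div_pow]; ring
  have e3 : Psi q ^ 8 = 16 * Psi (q^2)^4 * phi q^4 := by
    have : Psi q ^ 8 = (Psi q ^2)^4 := by ring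
    rw [this, s]; ring
  have : 64 * q * eulerE (q^2)^16 / eulerE q^8 = q / 4 * Psi q ^ 8 := by rw [e2]; ring
  rw [← e1, this, e3]
  linear_combination -4 * q * Psi (q^2)^4 * ab

noncomputable def T (q : ℝ) : ℝ := (1 - phi (-q)^2 / phi (-q^5)^2) / 4

structure TF (q E1 E2 E5 E10 : ℝ) : Prop where
  t : T q = q * E1 * E10^5 / (E2 * E5^5)
  y : 1 - 4 * T q = E1^4 * E10^2 / (E2^2 * E5^4)
  z : 1 + T q = E2^3 * E10 / (E1 * E5^3)

lemma T_facts {q : ℝ} (hq : 0 < q) (hq1 : q < 1) :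
    TF q (eulerE q) (eulerE (q^2)) (eulerE (q^5)) (eulerE (q^10)) := by
  have hq' : |q| < 1 := by rwa [abs_of_pos hq]
  have b1 := eulerE_ne_zero hq'
  have b2 := eulerE_ne_zero (abs_pow_lt hq' (n := 2) (by norm_num))
  have b5 := eulerE_ne_zero (abs_pow_lt hq' (n := 5) (by norm_num))
  have b10 := eulerE_ne_zero (abs_pow_lt hq' (n := 10) (by norm_num))
  have i1 := I1 hq hq1
  have i2 := I2 hq hq1
  have y : 1 - 4 * T q = eulerE q^4 * eulerE (q^10)^2 / (eulerE (q^2)^2 * eulerE (q^5)^4) := by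
    rw [T, phi_neg_prod hq.ne' hq', phi_neg_prod (by positivity)
      (abs_pow_lt hq' (n := 5) (by norm_num)), ← pow_mul]
    norm_num
    field_simp
    ring
  have t : T q = q * eulerE q * eulerE (q^10)^5 / (eulerE (q^2) * eulerE (q^5)^5) := by
    have : T q = (1 - eulerE q^4 * eulerE (q^10)^2 / (eulerE (q^2)^2 * eulerE (q^5)^4)) / 4 := by
      rw [← y]; ring
    rw [this]
    generalize eulerE q = E1 at *
    generalize eulerE (q^2) = E2 at *
    generalize eulerE (q^5) = E5 at *
    generalize eulerE (q^10) = E10 at *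
    field_simp at i2 ⊢
    linear_combination i2
  refine ⟨t, y, ?_⟩
  rw [t]
  generalize eulerE q = E1 at *
  generalize eulerE (q^2) = E2 at *
  generalize eulerE (q^5) = E5 at *
  generalize eulerE (q^10) = E10 at *
  field_simp at i1 ⊢
  linear_combination -i1


lemma phi_zero : phi 0 = 1 := by
  unfold phi th
  rw [tsum_eq_single 0]
  · simp [sqe]
  · intro n hn
    exact zero_pow (by simpa [sqe] using hn)

lemma phi_ne' {q : ℝ} (hq : |q| < 1) : phi q ≠ 0 := by
  rcases eq_or_ne q 0 with rfl | h
  · rw [phi_zero]; exact one_ne_zero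
  · exact phi_ne h hq

lemma T_diff {q : ℝ} (hq : |q| < 1) : DifferentiableAt ℝ T q := by
  have h1 : |-q| < 1 := by rwa [abs_neg]
  have h5 : |-q^5| < 1 := by rw [abs_neg]; exact abs_pow_lt hq (by norm_num)
  obtain ⟨a, ha, -⟩ := adm_sqe.hasDerivAt h1
  obtain ⟨b, hb, -⟩ := adm_sqe.hasDerivAt h5
  have d1 : DifferentiableAt ℝ (fun x => phi (-x)) q :=
    DifferentiableAt.comp (f := fun x : ℝ => -x) q ha.differentiableAt (by fun_prop)
  have d5 : DifferentiableAt ℝ (fun x => phi (-x^5)) q :=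
    DifferentiableAt.comp (f := fun x : ℝ => -x^5) q hb.differentiableAt (by fun_prop)
  unfold T
  exact ((differentiableAt_const _).sub ((d1.pow 2).div (d5.pow 2)
    (pow_ne_zero 2 (phi_ne' h5)))).div_const 4

lemma T_zero : T 0 = 0 := by simp [T, phi_zero]

lemma T_log {q : ℝ} (hq : 0 < q) (hq1 : q < 1) :
    q * deriv T q * (1 + 22 * T q - 4 * T q^2) = T q * ((1 + T q) * (1 - 4 * T q) *
      (phi (-q)^4 + 2 * q * Psi (q^2)^4)) := by
  have hq' : |q| < 1 := by rwa [abs_of_pos hq]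
  have hT := (T_diff hq').hasDerivAt
  set t' := deriv T q
  obtain ⟨a, ha, ha'⟩ := adm_tri.hasDerivAt hq'
  obtain ⟨b, hb, hb'⟩ := adm_sqe.hasDerivAt (q := -q) (by rwa [abs_neg])
  have hb2 : HasDerivAt (fun x => phi (-x)) (b * (-1)) q :=
    HasDerivAt.comp (h := fun x : ℝ => -x) q hb (hasDerivAt_neg q)
  have key : ∀ x : ℝ, 0 < x → x < 1 → 0 < T x ∧ 0 < 1 + T x ∧ 0 < 1 - 4 * T x ∧
      x * Psi x^8 * (1 - 4 * T x)^5 = 256 * phi (-x)^8 * (T x * (1 + T x)^5) := by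
    intro x hx hx1
    have hx' : |x| < 1 := by rwa [abs_of_pos hx]
    obtain ⟨t, y, z⟩ := T_facts hx hx1
    have p1 := eulerE_pos hx hx1
    have p2 := eulerE_pos (q := x^2) (by positivity) (pow_lt_one₀ hx.le hx1 (by norm_num))
    have p5 := eulerE_pos (q := x^5) (by positivity) (pow_lt_one₀ hx.le hx1 (by norm_num))
    have p10 := eulerE_pos (q := x^10) (by positivity) (pow_lt_one₀ hx.le hx1 (by norm_num))
    refine ⟨by rw [t]; positivity, by rw [z]; positivity, by rw [y]; positivity, ?_⟩
    rw [y, z, t, Psi_prod hx.ne' hx', phi_neg_prod hx.ne' hx']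
    field_simp
    norm_num
  obtain ⟨t0, z0, y0, -⟩ := key q hq hq1
  have c1 := Psi_ne hq.ne' hq'
  have c2 : phi (-q) ≠ 0 := phi_ne (neg_ne_zero.2 hq.ne') (by rwa [abs_neg])
  have l : HasDerivAt (fun x => log x + 8 * log (Psi x) - 8 * log (phi (-x)))
      (1 / q + 8 * (a / Psi q) - 8 * (b * (-1) / phi (-q))) q :=
    (((hasDerivAt_id q).log hq.ne').add ((ha.log c1).const_mul 8)).sub ((hb2.log c2).const_mul 8)
  have r : HasDerivAt (fun x => log 256 + log (T x) + 5 * log (1 + T x) - 5 * log (1 - 4 * T x))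
      (t' / T q + 5 * (t' / (1 + T q)) - 5 * (-(4 * t') / (1 - 4 * T q))) q :=
    (((hT.log t0.ne').const_add _).add (((hT.const_add 1).log z0.ne').const_mul 5)).sub
      ((((hT.const_mul 4).const_sub 1).log y0.ne').const_mul 5)
  have ev : (fun x => log x + 8 * log (Psi x) - 8 * log (phi (-x))) =ᶠ[nhds q]
      (fun x => log 256 + log (T x) + 5 * log (1 + T x) - 5 * log (1 - 4 * T x)) := by
    filter_upwards [isOpen_Ioo.mem_nhds (⟨hq, hq1⟩ : q ∈ Set.Ioo (0:ℝ) 1)] with x hx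
    obtain ⟨tx, zx, yx, kx⟩ := key x hx.1 hx.2
    have hx' : |x| < 1 := by rw [abs_of_pos hx.1]; exact hx.2
    have c1 := Psi_ne hx.1.ne' hx'
    have c2 : phi (-x) ≠ 0 := phi_ne (neg_ne_zero.2 hx.1.ne') (by rwa [abs_neg])
    have := congrArg log kx
    rw [log_mul (mul_ne_zero hx.1.ne' (pow_ne_zero _ c1)) (by positivity),
      log_mul hx.1.ne' (pow_ne_zero _ c1), log_mul (by positivity) (by positivity),
      log_mul (by positivity) (by positivity), log_mul (by positivity) (by positivity),
      log_pow, log_pow, log_pow, log_pow] at this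
    push_cast at this
    linear_combination this
  have u := l.unique (r.congr_of_eventuallyEq ev)
  have v := P2val hq.ne' hq'
  rw [← ha', ← hb'] at v
  have w : phi (-q)^4 + 2 * q * Psi (q^2)^4 =
      q * (t' / T q + 5 * (t' / (1 + T q)) - 5 * (-(4 * t') / (1 - 4 * T q))) := by
    rw [← v, ← u]
    field_simp
  rw [w]
  have y1 : (1 - 4 * T q) * (-(4 * t') / (1 - 4 * T q)) = -(4 * t') :=
    mul_div_cancel₀ _ y0.ne'
  have z1 : (1 + T q) * (t' / (1 + T q)) = t' := mul_div_cancel₀ _ z0.ne'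
  have t1 : T q * (t' / T q) = t' := mul_div_cancel₀ _ t0.ne'
  linear_combination (-(1 + T q) * (1 - 4 * T q) * q) * t1 -
    5 * T q * (1 - 4 * T q) * q * z1 + 5 * T q * (1 + T q) * q * y1

lemma T_ode {q : ℝ} (hq : 0 < q) (hq1 : q < 1) :
    q * deriv T q = T q * (eulerE q * eulerE (q^2)^2 * eulerE (q^5)^3 / eulerE (q^10)^2) *
      √(1 + 4 * T q^2) := by
  have hq' : |q| < 1 := by rwa [abs_of_pos hq]
  have hl := T_log hq hq1
  have h2 := P2sq hq.ne' hq'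
  have c2 : phi (-q) ≠ 0 := phi_ne (neg_ne_zero.2 hq.ne') (by rwa [abs_neg])
  have hP : 0 < phi (-q)^4 + 2 * q * Psi (q^2)^4 := by positivity
  obtain ⟨t, y, z⟩ := T_facts hq hq1
  have p1 := eulerE_pos hq hq1
  have p2 := eulerE_pos (q := q^2) (by positivity) (pow_lt_one₀ hq.le hq1 (by norm_num))
  have p5 := eulerE_pos (q := q^5) (by positivity) (pow_lt_one₀ hq.le hq1 (by norm_num))
  have p10 := eulerE_pos (q := q^10) (by positivity) (pow_lt_one₀ hq.le hq1 (by norm_num))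
  have t0 : 0 < T q := by rw [t]; positivity
  have z0 : 0 < 1 + T q := by rw [z]; positivity
  have y0 : 0 < 1 - 4 * T q := by rw [y]; positivity
  have hK : 0 < 1 + 22 * T q - 4 * T q ^2 := by nlinarith
  set P := phi (-q)^4 + 2 * q * Psi (q^2)^4
  generalize deriv T q = t' at *
  have f1 : P^2 * ((1 + T q) * (1 - 4 * T q))^2 =
      (eulerE q * eulerE (q^2)^2 * eulerE (q^5)^3 / eulerE (q^10)^2)^2 *
      ((1 - 4 * T q)^5 + 64 * (T q * (1 + T q)^5)) := by
    rw [h2, y, z, t]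
    generalize eulerE q = E1 at *
    generalize eulerE (q^2) = E2 at *
    generalize eulerE (q^5) = E5 at *
    generalize eulerE (q^10) = E10 at *
    field_simp
  set H := eulerE q * eulerE (q^2)^2 * eulerE (q^5)^3 / eulerE (q^10)^2 with hH
  have H0 : 0 < H := by positivity
  have f2 : (1 - 4 * T q)^5 + 64 * (T q * (1 + T q)^5) =
    (1 + 4 * T q^2) * (1 + 22 * T q - 4 * T q ^2)^2 := by ring
  have f3 : P * ((1 + T q) * (1 - 4 * T q)) =
      H * √(1 + 4 * T q^2) * (1 + 22 * T q - 4 * T q ^2) := by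
    rw [← sq_eq_sq₀ (by positivity) (by positivity), mul_pow, f1, f2, mul_pow, mul_pow,
      Real.sq_sqrt (by positivity)]
    ring
  refine mul_right_cancel₀ hK.ne' ?_
  rw [hl]
  linear_combination T q * f3

open Real

noncomputable def rEta (y : ℝ) : ℝ := exp (-π * y / 12) * eulerE (exp (-2 * π * y))

lemma eta_I_mul {y : ℝ} (hy : 0 < y) : ModularForm.eta (Complex.I * y) = (rEta y : ℂ) := by
  have h1 : ∀ n : ℕ, (1 - ModularForm.eta_q n (Complex.I * y)) =
      ((1 - exp (-2 * π * y) ^ (n + 1) : ℝ) : ℂ) := by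
    intro n
    rw [ModularForm.eta_q_eq_pow]
    push_cast
    congr 3
    linear_combination (2 * π * y : ℂ) * Complex.I_mul_I
  unfold ModularForm.eta rEta eulerE
  simp_rw [h1]
  rw [Complex.ofReal_mul]
  congr 1
  · unfold Function.Periodic.qParam
    push_cast
    congr 1
    linear_combination (2 * π * y / 24 : ℂ) * Complex.I_mul_I
  · have hlt : ‖exp (-2 * π * y)‖ < 1 := by
      rw [Real.norm_of_nonneg (exp_pos _).le, exp_lt_one_iff]
      have := mul_pos pi_pos hy
      linarith
    have hm : Multipliable fun n : ℕ => (1 - exp (-2 * π * y) ^ (n + 1)) := by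
      simp only [sub_eq_add_neg]
      apply multipliable_one_add_of_summable
      simpa using (summable_nat_add_iff 1).mpr (summable_geometric_of_lt_one (exp_pos _).le
        (by rw [Real.norm_of_nonneg (exp_pos _).le] at hlt; simpa using hlt))
    exact (hm.map_tprod Complex.ofRealHom Complex.continuous_ofReal).symm

lemma csqrt_sq (z : ℂ) : Complex.sqrt z ^ 2 = z := by
  unfold Complex.sqrt
  rw [← Complex.cpow_nat_mul]
  norm_num

lemma rEta_inv {y : ℝ} (hy : 0 < y) : rEta (1 / y) ^ 2 = y * rEta y ^ 2 := by
  have h := ModularForm.eta_comp_eq_csqrt_I_inv (x := Complex.I * y) (by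
    show 0 < (Complex.I * y).im
    simpa using hy)
  have hy' : (y:ℂ) ≠ 0 := by exact_mod_cast hy.ne'
  have e : -1 / (Complex.I * y) = Complex.I * ((1 / y : ℝ) : ℂ) := by
    push_cast
    field_simp
    simp
  simp only [Function.comp, Pi.smul_apply, Pi.mul_apply, smul_eq_mul] at h
  rw [e, eta_I_mul (by positivity), eta_I_mul hy] at h
  have h2 := congrArg (fun z => z ^ 2) h
  simp only [mul_pow, inv_pow, csqrt_sq] at h2
  have : ((rEta (1/y) ^ 2 : ℝ) : ℂ) = ((y * rEta y ^ 2 : ℝ) : ℂ) := by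
    push_cast
    rw [h2]
    field_simp
  exact_mod_cast this

lemma T_val : T (exp (-2 * π / √10)) = (√5 - 2) / 2 := by
  set q := exp (-2 * π / √10) with hqd
  have s10 : 0 < √(10:ℝ) := by positivity
  have sq10 : √(10:ℝ)^2 = 10 := Real.sq_sqrt (by norm_num)
  have hq : 0 < q := exp_pos _
  have hq1 : q < 1 := by
    rw [hqd, exp_lt_one_iff]
    have := pi_pos
    have : 0 < 2 * π / √10 := by positivity
    rw [neg_mul, neg_div]; linarith
  obtain ⟨t, -, z⟩ := T_facts hq hq1
  have p1 := eulerE_pos hq hq1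
  have p2 := eulerE_pos (q := q^2) (by positivity) (pow_lt_one₀ hq.le hq1 (by norm_num))
  have p5 := eulerE_pos (q := q^5) (by positivity) (pow_lt_one₀ hq.le hq1 (by norm_num))
  have p10 := eulerE_pos (q := q^10) (by positivity) (pow_lt_one₀ hq.le hq1 (by norm_num))
  have t0 : 0 < T q := by rw [t]; positivity
  set s := exp (-π / (12 * √10)) with hs
  have s0 : 0 < s := exp_pos _
  have hk : ∀ k : ℕ, rEta (k / √10) = s ^ k * eulerE (q ^ k) := by
    intro k
    rw [rEta, hs, hqd, ← exp_nat_mul, ← exp_nat_mul]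
    congr 2
    · field_simp
    · congr 1
      field_simp
  have a1 := rEta_inv (y := ((10:ℕ):ℝ) / √10) (by positivity)
  have a2 := rEta_inv (y := ((5:ℕ):ℝ) / √10) (by positivity)
  have e1 : 1 / (((10:ℕ):ℝ) / √10) = ((1:ℕ):ℝ) / √10 := by
    push_cast; field_simp; linear_combination sq10
  have e2 : 1 / (((5:ℕ):ℝ) / √10) = ((2:ℕ):ℝ) / √10 := by
    push_cast; field_simp; linear_combination sq10
  rw [e1, hk, hk] at a1
  rw [e2, hk, hk] at a2
  simp only [pow_one] at a1
  have hz : (1 + T q) ^ 2 = 5 / 4 := by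
    rw [z]
    have : (eulerE (q^2)^3 * eulerE (q^10) / (eulerE q * eulerE (q^5)^3))^2 =
      ((s^2 * eulerE (q^2))^2)^3 * (s^10 * eulerE (q^10))^2 /
        ((s * eulerE q)^2 * ((s^5 * eulerE (q^5))^2)^3) := by
      field_simp
    rw [this, a1, a2]
    push_cast
    field_simp
    norm_num [sq10]
  have h5 : √5 = 2 * (1 + T q) := by
    rw [Real.sqrt_eq_iff_mul_self_eq (by norm_num) (by positivity)]
    first | linear_combination 4 * hz | linear_combination (-4) * hz
  rw [h5]; ring

theorem stmt_7 :
    (∫ q in (0:ℝ)..Real.exp (-2 * Real.pi / Real.sqrt 10),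
        q * eulerE q ^ 3 * eulerE (q ^ 10) ^ 8 / eulerE (q ^ 5) ^ 7)
      = (Real.sqrt (10 - 4 * Real.sqrt 5) - 1) / 4 := by
  have hv := T_val
  set b := exp (-2 * π / √10) with hb
  have hb0 : 0 < b := exp_pos _
  have hb1 : b < 1 := by
    rw [hb, exp_lt_one_iff]
    have := pi_pos
    have : 0 < 2 * π / √10 := by positivity
    rw [neg_mul, neg_div]; linarith
  have hder : ∀ x ∈ Set.Ioo (0:ℝ) b, HasDerivAt (fun x => √(1 + 4 * T x ^ 2) / 4)
      (x * eulerE x ^ 3 * eulerE (x ^ 10) ^ 8 / eulerE (x ^ 5) ^ 7) x := by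
    intro x hx
    have hx1 := hx.2.trans hb1
    have hx0 := hx.1
    have hx' : |x| < 1 := by rwa [abs_of_pos hx0]
    have hT := (T_diff hx').hasDerivAt
    have ode := T_ode hx0 hx1
    have t := (T_facts hx0 hx1).t
    have p1 := eulerE_pos hx0 hx1
    have p2 := eulerE_pos (q := x^2) (by positivity) (pow_lt_one₀ hx0.le hx1 (by norm_num))
    have p5 := eulerE_pos (q := x^5) (by positivity) (pow_lt_one₀ hx0.le hx1 (by norm_num))
    have p10 := eulerE_pos (q := x^10) (by positivity) (pow_lt_one₀ hx0.le hx1 (by norm_num))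
    have hS : 0 < 1 + 4 * T x ^ 2 := by positivity
    have hS' : √(1 + 4 * T x ^ 2) ≠ 0 := by positivity
    have d := ((((hT.pow 2).const_mul 4).const_add 1).sqrt hS.ne').div_const 4
    refine HasDerivAt.congr_deriv d ?_
    have hd : deriv T x = T x * (eulerE x * eulerE (x^2)^2 * eulerE (x^5)^3 / eulerE (x^10)^2) *
      √(1 + 4 * T x^2) / x := by rw [← ode]; field_simp
    rw [hd]
    simp only [Pi.pow_apply] at hS' ⊢
    generalize √(1 + 4 * T x ^ 2) = S at hS' ⊢
    norm_num
    rw [t]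
    field_simp
  have hcont : ContinuousOn (fun x => √(1 + 4 * T x ^ 2) / 4) (Set.Icc 0 b) := by
    intro x hx
    have hx' : |x| < 1 := by rw [abs_of_nonneg hx.1]; exact hx.2.trans_lt hb1
    have := (T_diff hx').continuousAt
    exact ContinuousAt.continuousWithinAt (by fun_prop)
  have hint := intervalIntegral.integrableOn_deriv_of_nonneg hcont hder (by
    intro x hx
    have hx1 := hx.2.trans hb1
    have hx0 := hx.1
    have p1 := eulerE_pos hx0 hx1
    have p5 := eulerE_pos (q := x^5) (by positivity) (pow_lt_one₀ hx0.le hx1 (by norm_num))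
    have p10 := eulerE_pos (q := x^10) (by positivity) (pow_lt_one₀ hx0.le hx1 (by norm_num))
    positivity)
  rw [intervalIntegral.integral_eq_sub_of_hasDerivAt_of_le hb0.le hcont hder
    ((intervalIntegrable_iff_integrableOn_Ioc_of_le hb0.le).2 hint), T_zero, hv]
  have s5 : √(5:ℝ)^2 = 5 := Real.sq_sqrt (by norm_num)
  have : 1 + 4 * ((√5 - 2) / 2) ^ 2 = 10 - 4 * √(5:ℝ) := by linear_combination s5
  rw [this]
  norm_num
  ring
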